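/- arXiv:2510.26179 — 3 statements merged into one kernel-verified Lean document; each statement's English description precedes it below -/
import Mathlib

section
/- Let q ≥ 1 be an integer, p = 2q+1, γ ∈ (0,1), and n ≥ 1. Let x₁,…,xₙ be nonzero real numbers and δ₁,…,δₙ real numbers such that for each i the quantity x̌_i := γ⁻¹(x_i + γδ_i) + p·1_{x_i<0} is an integer lying in {0,…,q} when x_i > 0 and in {q+1,…,p−1} when x_i < 0. If −q−1 < γ⁻ⁿ·∏_{i=1}^n (x_i + γδ_i) ≤ q, then Dcd_{γⁿ}( (∏_{i=1}^n x̌_i) mod p ) = ∏_{i=1}^n (x_i + γδ_i). -/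
open BigOperators

/-!
Modulo `2 * q + 1`, each encoding is congruent to its unwrapped value `γ i⁻¹ * z i`, which is an
integer. Hence the product of the encodings is congruent to the product of these integers, and the
range condition makes the latter the unique representative in `(-q - 1, q]`, which is what the
decoder returns.
-/

section CenteredDecode

variable {R : Type*} {q m : ℤ}

/-- The decoder `Dcd_γ` for the modulus `p = 2 * q + 1`: a residue `m ∈ {0, …, p - 1}` is read as
the integer in `(-q - 1, q]` congruent to it modulo `p`, and rescaled by `γ`. The argument `m` is
expected to be reduced modulo `p` already. -/
def centeredDecode [Ring R] (q : ℤ) (γ : R) (m : ℤ) : R :=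
  γ * ((m : R) - ((2 * q + 1 : ℤ) : R) * (if q < m then 1 else 0))

theorem centeredDecode_of_le [Ring R] (γ : R) (h : m ≤ q) : centeredDecode q γ m = γ * m := by
  simp [centeredDecode, h.not_gt]

theorem centeredDecode_of_lt [Ring R] (γ : R) (h : q < m) :
    centeredDecode q γ m = γ * ((m - (2 * q + 1) : ℤ) : R) := by
  simp [centeredDecode, h]

theorem centeredDecode_emod [Ring R] (γ : R) (hm : m ∈ Set.Ioc (-q - 1) q) :
    centeredDecode q γ (m % (2 * q + 1)) = γ * m := by
  obtain ⟨hlower, hupper⟩ := hm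
  rcases le_or_gt 0 m with hm_nonneg | hm_neg
  · have hemod : m % (2 * q + 1) = m := Int.emod_eq_of_lt hm_nonneg (by lia)
    rw [hemod, centeredDecode_of_le γ hupper]
  · have hemod : m % (2 * q + 1) = m + (2 * q + 1) := by
      rw [← Int.add_emod_right, Int.emod_eq_of_lt (by lia) (by lia)]
    rw [hemod, centeredDecode_of_lt γ (by lia), add_sub_cancel_right]

theorem centeredDecode_prod_emod [CommRing R] {ι : Type*} {s : Finset ι} (γ : ι → R)
    {c r : ι → ℤ} (hcr : ∀ i ∈ s, c i ≡ r i [ZMOD 2 * q + 1])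
    (hr : ∏ i ∈ s, r i ∈ Set.Ioc (-q - 1) q) :
    centeredDecode q (∏ i ∈ s, γ i) ((∏ i ∈ s, c i) % (2 * q + 1)) = ∏ i ∈ s, γ i * r i := by
  have hprod : (∏ i ∈ s, c i) % (2 * q + 1) = (∏ i ∈ s, r i) % (2 * q + 1) := Int.ModEq.prod hcr
  rw [hprod, centeredDecode_emod _ hr, Int.cast_prod, Finset.prod_mul_distrib]

theorem stmt_5_general {K ι : Type*} [Field K] [LinearOrder K] [IsStrictOrderedRing K]
    (s : Finset ι) (q : ℤ) {γ z : ι → K} (hγ : ∀ i ∈ s, γ i ≠ 0) {c k : ι → ℤ}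
    (hc : ∀ i ∈ s, (c i : K) = (γ i)⁻¹ * z i + ((2 * q + 1 : ℤ) : K) * k i)
    (hrange : (∏ i ∈ s, γ i)⁻¹ * ∏ i ∈ s, z i ∈ Set.Ioc (-(q : K) - 1) q) :
    centeredDecode q (∏ i ∈ s, γ i) ((∏ i ∈ s, c i) % (2 * q + 1)) = ∏ i ∈ s, z i := by
  let r : ι → ℤ := fun i ↦ c i - (2 * q + 1) * k i
  have hcr : ∀ i ∈ s, c i ≡ r i [ZMOD 2 * q + 1] := fun _ _ ↦
    Int.modEq_sub_modulus_mul_iff.2 rfl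
  have hr : ∀ i ∈ s, (r i : K) = (γ i)⁻¹ * z i := fun i hi ↦ by
    simp only [r, Int.cast_sub, Int.cast_mul, hc i hi, add_sub_cancel_right]
  have hprod : ((∏ i ∈ s, r i : ℤ) : K) = (∏ i ∈ s, γ i)⁻¹ * ∏ i ∈ s, z i := by
    rw [Int.cast_prod, Finset.prod_congr rfl hr, Finset.prod_mul_distrib, Finset.prod_inv_distrib]
  have hprod_mem : ∏ i ∈ s, r i ∈ Set.Ioc (-q - 1) q := by
    rw [← hprod] at hrange
    exact ⟨by exact_mod_cast hrange.1, by exact_mod_cast hrange.2⟩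
  rw [centeredDecode_prod_emod γ hcr hprod_mem]
  exact Finset.prod_congr rfl fun i hi ↦ by rw [hr i hi, mul_inv_cancel_left₀ (hγ i hi)]

end CenteredDecode

/-- Decoding (at sensitivity γⁿ) the residue mod p = 2q+1 of the product of the
encodings x̌ᵢ = γ⁻¹(xᵢ + γδᵢ) + p·1_{xᵢ<0} recovers ∏ (xᵢ + γδᵢ), provided
γ⁻ⁿ·∏ (xᵢ + γδᵢ) lies in (−q−1, q]. -/
theorem stmt_5 (q : ℤ) (hq : 1 ≤ q) (γ : ℝ) (hγ : 0 < γ ∧ γ < 1)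
    (n : ℕ) (hn : 1 ≤ n) (x δ : Fin n → ℝ) (hx : ∀ i, x i ≠ 0)
    (xc : Fin n → ℤ)
    (hxc : ∀ i, (xc i : ℝ) =
      γ⁻¹ * (x i + γ * δ i) + ((2 * q + 1 : ℤ) : ℝ) * (if x i < 0 then 1 else 0))
    (hpos : ∀ i, 0 < x i → 0 ≤ xc i ∧ xc i ≤ q)
    (hneg : ∀ i, x i < 0 → q < xc i ∧ xc i ≤ 2 * q)
    (hrange : -(q : ℝ) - 1 < (γ ^ n)⁻¹ * ∏ i, (x i + γ * δ i) ∧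
              (γ ^ n)⁻¹ * ∏ i, (x i + γ * δ i) ≤ (q : ℝ)) :
    γ ^ n * ((((∏ i, xc i) % (2 * q + 1) : ℤ) : ℝ) -
      ((2 * q + 1 : ℤ) : ℝ) * (if q < (∏ i, xc i) % (2 * q + 1) then 1 else 0)) =
      ∏ i, (x i + γ * δ i) := by
  simpa [centeredDecode] using stmt_5_general Finset.univ q (γ := fun _ ↦ γ)
    (k := fun i ↦ if x i < 0 then 1 else 0) (fun _ _ ↦ hγ.1.ne') (fun i _ ↦ by simpa using hxc i)
    (by simpa using hrange)
end

section
/- Let p be a prime, g a unit of ℤ/pℤ, s ∈ ℕ, h = gˢ, n ≥ 1, and let m₁,…,mₙ be units of ℤ/pℤ with respective randomness values r₁,…,rₙ ∈ ℕ. Then decryption of the componentwise (Hadamard) product of the n ElGamal ciphertexts (g^{r_i}, m_i·h^{r_i}) equals the product ∏_{i=1}^n m_i in the unit group of ℤ/pℤ. -/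
open BigOperators

namespace ElGamal

variable {G : Type*} [CommGroup G]

/-- The ElGamal ciphertext of the message `m` with randomness `r`, for the base `g` and the public
key `h`. As ciphertexts live in `G × G`, their Hadamard product is multiplication there. -/
def encrypt (g h m : G) (r : ℕ) : G × G :=
  (g ^ r, m * h ^ r)

/-- ElGamal decryption `(c₁, c₂) ↦ c₁⁻ˢ c₂` with secret key `s`, bundled as a homomorphism for the
Hadamard product. -/
def decrypt (s : ℕ) : G × G →* G :=
  ((powMonoidHom s).comp (MonoidHom.fst G G))⁻¹ * MonoidHom.snd G G

lemma decrypt_apply (s : ℕ) (c : G × G) : decrypt s c = (c.1 ^ s)⁻¹ * c.2 :=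
  rfl

lemma decrypt_encrypt {g h : G} {s : ℕ} (hh : h = g ^ s) (m : G) (r : ℕ) :
    decrypt s (encrypt g h m r) = m := by
  have mask_eq : (g ^ r) ^ s = h ^ r := by rw [hh, pow_right_comm]
  rw [decrypt_apply, encrypt, mask_eq, mul_comm m, inv_mul_cancel_left]

end ElGamal

theorem stmt_8_general {G ι : Type*} [CommGroup G] {g h : G} {s : ℕ} (hh : h = g ^ s)
    (t : Finset ι) (m : ι → G) (r : ι → ℕ) :
    ElGamal.decrypt s (∏ i ∈ t, ElGamal.encrypt g h (m i) (r i)) = ∏ i ∈ t, m i := by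
  simp only [map_prod, ElGamal.decrypt_encrypt hh]

/-- Decryption of the Hadamard product of n ElGamal ciphertexts (g^{rᵢ}, mᵢ·h^{rᵢ})
equals the product ∏ mᵢ in the unit group of ℤ/pℤ. -/
theorem stmt_8 (p : ℕ) [Fact p.Prime] (g : (ZMod p)ˣ) (s : ℕ)
    (h : (ZMod p)ˣ) (hh : h = g ^ s) (n : ℕ) (hn : 1 ≤ n)
    (m : Fin n → (ZMod p)ˣ) (r : Fin n → ℕ) :
    ((∏ i, g ^ r i) ^ s)⁻¹ * ∏ i, (m i * h ^ r i) = ∏ i, m i := by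
  simpa only [ElGamal.decrypt_apply, ElGamal.encrypt, Prod.fst_prod, Prod.snd_prod] using
    stmt_8_general hh Finset.univ m r
end

section
/- Let n, N ≥ 1, let W be an (nN)×n real matrix such that Ψ := WᵀW is invertible, let Γ ∈ ℝ^{nN}, and let F* := −ΓᵀW(WᵀW)⁻¹. Let q ≥ 1 be an integer, p = 2q+1, and γ ∈ (0,1). Suppose that −1 and every entry Γ_i, W_{il}, and (Φ_σ)_{l,m} (for all permutations σ of {1,…,n−1} and all indices) is an integer multiple of γ, and that for every triple (σ, i, l) and every column index m the scaled product γ⁻⁴·(−1)·Γ_i·W_{il}·(Φ_σ)_{l,m} lies in (−q−1, q]. For a real number y = γz with z ∈ ℤ and −q−1 < z ≤ q, write Ecd_γ(y) := (z mod p) ∈ {0,…,p−1}. Then summing, over all permutations σ of {1,…,n−1}, all i ∈ {1,…,nN}, all l ∈ {1,…,n}, and each column index m ∈ {1,…,n}, the values Dcd_{γ⁴}( (Ecd_γ(−1)·Ecd_γ(Γ_i)·Ecd_γ(W_{il})·Ecd_γ((Φ_σ)_{l,m})) mod p ) recovers exactly the m-th entry of F*; that is, the confidential FRIT computation over encoded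 residues equals F* when all quantization errors are zero. -/
open Matrix BigOperators

/-!
Reduction modulo `2q + 1` is multiplicative and invertible on `(-q - 1, q]`, so decoding the product
of four residues at scale `γ⁴` returns the product of the four encoded numbers as soon as it
lies in that range. The sum over `σ` then assembles the inverse: expanding each cofactor by the
Leibniz formula exhibits the intermediate generation matrices as a splitting of `Ψ⁻¹`.
-/

namespace ConfidentialFRIT

/-- The encoding `Ecd_γ (γ z) = z mod p` with `p = 2q + 1`, as a function of the integer `z`; the
scale `γ` only enters through `γ z`. -/
def encode (q z : ℤ) : ℤ := z % (2 * q + 1)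

/-- The decoder `Dcd_γ`: `γ` times the representative of `m` modulo `p = 2q + 1` in `(-q - 1, q]`,
for a residue `0 ≤ m < p`. -/
def decode {R : Type*} [Ring R] (q : ℤ) (γ : R) (m : ℤ) : R :=
  γ * ((m : R) - ((2 * q + 1 : ℤ) : R) * if q < m then 1 else 0)

/-- The intermediate generation matrix `Φ_σ`: the contribution of the permutation `σ` to `Ψ⁻¹`
when every cofactor of `Ψ` is expanded by the Leibniz formula. -/
def generationMatrix {R : Type*} [CommRing R] {n : ℕ}
    (Ψ : Matrix (Fin (n + 1)) (Fin (n + 1)) R) [Invertible Ψ.det] (σ : Equiv.Perm (Fin n)) :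
    Matrix (Fin (n + 1)) (Fin (n + 1)) R :=
  of fun j i => ⅟Ψ.det * (-1) ^ ((i : ℕ) + (j : ℕ)) * ((Equiv.Perm.sign σ : ℤ) : R) *
    ∏ l, Ψ.submatrix i.succAbove j.succAbove l (σ l)

section Codec

variable {ι : Type*} {q : ℤ}

lemma encode_prod (s : Finset ι) (z : ι → ℤ) :
    encode q (∏ i ∈ s, encode q (z i)) = encode q (∏ i ∈ s, z i) :=
  (Finset.prod_int_mod s (2 * q + 1) z).symm

lemma encode_of_nonneg {z : ℤ} (hz : 0 ≤ z) (hzq : z ≤ q) : encode q z = z :=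
  Int.emod_eq_of_lt hz (by lia)

lemma encode_of_neg {z : ℤ} (hz : z < 0) (hqz : -q - 1 < z) : encode q z = z + (2 * q + 1) := by
  rw [encode, ← Int.add_emod_right, Int.emod_eq_of_lt (by lia) (by lia)]

lemma decode_encode {R : Type*} [Ring R] (γ : R) {z : ℤ} (hz : z ∈ Set.Ioc (-q - 1) q) :
    decode q γ (encode q z) = γ * z := by
  obtain ⟨hqz, hzq⟩ := hz
  rcases le_or_gt 0 z with hnonneg | hneg
  · rw [encode_of_nonneg hnonneg hzq, decode, if_neg hzq.not_gt, mul_zero, sub_zero]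
  · rw [encode_of_neg hneg hqz, decode, if_pos (by lia), mul_one, Int.cast_add,
      add_sub_cancel_right]

lemma decode_encode_prod {R : Type*} [CommRing R] (γ : R) (s : Finset ι) {z : ι → ℤ}
    (hz : ∏ i ∈ s, z i ∈ Set.Ioc (-q - 1) q) :
    decode q (γ ^ s.card) (encode q (∏ i ∈ s, encode q (z i))) = ∏ i ∈ s, γ * z i := by
  rw [encode_prod, decode_encode _ hz, Finset.prod_mul_distrib, Finset.prod_const, Int.cast_prod]

lemma prod_mem_Ioc_of_scaled {K : Type*} [Field K] [LinearOrder K] [IsStrictOrderedRing K]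
    {γ : K} (hγ : γ ≠ 0) (s : Finset ι) {z : ι → ℤ}
    (h : (γ ^ s.card)⁻¹ * ∏ i ∈ s, γ * z i ∈ Set.Ioc (-(q : K) - 1) q) :
    ∏ i ∈ s, z i ∈ Set.Ioc (-q - 1) q := by
  rw [Finset.prod_mul_distrib, Finset.prod_const, inv_mul_cancel_left₀ (pow_ne_zero _ hγ)] at h
  exact ⟨by exact_mod_cast h.1, by exact_mod_cast h.2⟩

end Codec

section InverseExpansion

variable {R : Type*} [CommRing R]

lemma adjugate_fin_succ_eq_sum_perm {n : ℕ} (A : Matrix (Fin (n + 1)) (Fin (n + 1)) R)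
    (j i : Fin (n + 1)) :
    A.adjugate j i = (-1) ^ ((i : ℕ) + (j : ℕ)) *
      ∑ σ : Equiv.Perm (Fin n), ((Equiv.Perm.sign σ : ℤ) : R) *
        ∏ l, A.submatrix i.succAbove j.succAbove l (σ l) := by
  rw [adjugate_fin_succ_eq_det_submatrix, ← det_transpose, det_apply']
  simp only [transpose_apply]

lemma sum_generationMatrix {n : ℕ} (Ψ : Matrix (Fin (n + 1)) (Fin (n + 1)) R)
    [Invertible Ψ.det] : ∑ σ, generationMatrix Ψ σ = Ψ⁻¹ := by
  ext j i
  rw [inv_def, Ring.inverse_invertible, Matrix.smul_apply, adjugate_fin_succ_eq_sum_perm,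
    smul_eq_mul, ← mul_assoc, Finset.mul_sum, Matrix.sum_apply]
  simp only [generationMatrix, of_apply, mul_assoc]

lemma sum_mul_mul_mul_eq_mul_vecMul {S ι κ μ : Type*} [Fintype S] [Fintype ι] [Fintype κ]
    (a : R) (x : ι → R) (A : Matrix ι κ R) (B : S → Matrix κ μ R) (c : μ) :
    ∑ s, ∑ i, ∑ l, a * x i * A i l * B s l c = a * (x ᵥ* A ᵥ* ∑ s, B s) c := by
  have vecMul_single (s : S) : ∑ i, ∑ l, a * x i * A i l * B s l c = a * (x ᵥ* A ᵥ* B s) c := by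
    simp only [vecMul, dotProduct, Finset.sum_mul, Finset.mul_sum, mul_assoc]
    exact Finset.sum_comm
  simp only [vecMul_single, ← Finset.mul_sum, vecMul_sum, Finset.sum_apply]

end InverseExpansion

end ConfidentialFRIT

open ConfidentialFRIT

theorem stmt_13_general {R ι : Type*} [CommRing R] [Fintype ι] {n : ℕ}
    (W : Matrix ι (Fin (n + 1)) R) (Γ : ι → R)
    (Ψ : Matrix (Fin (n + 1)) (Fin (n + 1)) R) [Invertible Ψ.det] (q : ℤ) (γ : R)
    (zneg : ℤ) (hzneg : γ * zneg = -1)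
    (zΓ : ι → ℤ) (hzΓ : ∀ i, γ * zΓ i = Γ i)
    (zW : ι → Fin (n + 1) → ℤ) (hzW : ∀ i l, γ * zW i l = W i l)
    (zΦ : Equiv.Perm (Fin n) → Fin (n + 1) → Fin (n + 1) → ℤ)
    (hzΦ : ∀ σ l c, γ * zΦ σ l c = generationMatrix Ψ σ l c)
    (hprod : ∀ σ i l c, zneg * zΓ i * zW i l * zΦ σ l c ∈ Set.Ioc (-q - 1) q)
    (c : Fin (n + 1)) :
    ∑ σ, ∑ i, ∑ l, decode q (γ ^ 4) (encode q
        (encode q zneg * encode q (zΓ i) * encode q (zW i l) * encode q (zΦ σ l c))) =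
      -(Γ ᵥ* W ᵥ* Ψ⁻¹) c := by
  have decode_term (σ i l) : decode q (γ ^ 4) (encode q
      (encode q zneg * encode q (zΓ i) * encode q (zW i l) * encode q (zΦ σ l c))) =
      -1 * Γ i * W i l * generationMatrix Ψ σ l c := by
    rw [← hzneg, ← hzΓ, ← hzW, ← hzΦ]
    simpa [Fin.prod_univ_four] using decode_encode_prod γ Finset.univ
      (z := ![zneg, zΓ i, zW i l, zΦ σ l c]) (by simpa [Fin.prod_univ_four] using hprod σ i l c)
  simp only [decode_term]
  rw [sum_mul_mul_mul_eq_mul_vecMul, sum_generationMatrix, neg_one_mul]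

/-- Confidential FRIT correctness with zero quantization error: if −1 and all entries
Γᵢ, W_{il}, (Φ_σ)_{l,m} are exact integer multiples of γ (with encodings in the valid
range (−q−1, q]), and each scaled product γ⁻⁴·(−1)·Γᵢ·W_{il}·(Φ_σ)_{l,m} lies in
(−q−1, q], then summing the decoded residues Dcd_{γ⁴}((Ecd_γ(−1)·Ecd_γ(Γᵢ)·Ecd_γ(W_{il})·
Ecd_γ((Φ_σ)_{l,m})) mod p) over σ, i, l recovers exactly the m-th entry of
F* = −ΓᵀW(WᵀW)⁻¹, where p = 2q+1 and Ecd_γ(γz) = z mod p. -/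
theorem stmt_13 (n N : ℕ)
    (W : Matrix (Fin ((n + 1) * (N + 1))) (Fin (n + 1)) ℝ)
    (Γ : Matrix (Fin ((n + 1) * (N + 1))) (Fin 1) ℝ)
    (hΨ : IsUnit (Wᵀ * W).det)
    (Φ : Equiv.Perm (Fin n) → Matrix (Fin (n + 1)) (Fin (n + 1)) ℝ)
    (hΦ : ∀ σ j i, Φ σ j i =
      ((Wᵀ * W).det)⁻¹ * (-1 : ℝ) ^ ((i : ℕ) + (j : ℕ)) * ((Equiv.Perm.sign σ : ℤ) : ℝ) *
        ∏ l : Fin n, (Wᵀ * W).submatrix i.succAbove j.succAbove l (σ l))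
    (q : ℤ) (hq : 1 ≤ q) (γ : ℝ) (hγ : 0 < γ ∧ γ < 1)
    (zneg : ℤ) (hzneg : γ * (zneg : ℝ) = -1) (hznegr : -q - 1 < zneg ∧ zneg ≤ q)
    (zΓ : Fin ((n + 1) * (N + 1)) → ℤ) (hzΓ : ∀ i, γ * (zΓ i : ℝ) = Γ i 0)
    (hzΓr : ∀ i, -q - 1 < zΓ i ∧ zΓ i ≤ q)
    (zW : Fin ((n + 1) * (N + 1)) → Fin (n + 1) → ℤ)
    (hzW : ∀ i l, γ * (zW i l : ℝ) = W i l)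
    (hzWr : ∀ i l, -q - 1 < zW i l ∧ zW i l ≤ q)
    (zΦ : Equiv.Perm (Fin n) → Fin (n + 1) → Fin (n + 1) → ℤ)
    (hzΦ : ∀ σ l c, γ * (zΦ σ l c : ℝ) = Φ σ l c)
    (hzΦr : ∀ σ l c, -q - 1 < zΦ σ l c ∧ zΦ σ l c ≤ q)
    (hprod : ∀ (σ : Equiv.Perm (Fin n)) i l c,
        -(q : ℝ) - 1 < (γ ^ 4)⁻¹ * ((-1) * Γ i 0 * W i l * Φ σ l c) ∧
        (γ ^ 4)⁻¹ * ((-1) * Γ i 0 * W i l * Φ σ l c) ≤ (q : ℝ)) :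
    ∀ c : Fin (n + 1),
      (∑ σ : Equiv.Perm (Fin n), ∑ i, ∑ l,
        γ ^ 4 * (((((zneg % (2 * q + 1)) * (zΓ i % (2 * q + 1)) * (zW i l % (2 * q + 1)) *
              (zΦ σ l c % (2 * q + 1))) % (2 * q + 1) : ℤ) : ℝ) -
          ((2 * q + 1 : ℤ) : ℝ) *
            (if q < ((zneg % (2 * q + 1)) * (zΓ i % (2 * q + 1)) * (zW i l % (2 * q + 1)) *
              (zΦ σ l c % (2 * q + 1))) % (2 * q + 1) then 1 else 0))) =
      (-(Γᵀ * W * (Wᵀ * W)⁻¹)) 0 c := by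
  let := hΨ.invertible
  have hΦ_gen (σ l c) : γ * zΦ σ l c = generationMatrix (Wᵀ * W) σ l c := by
    rw [hzΦ, hΦ, generationMatrix, of_apply, invOf_eq_inv]
  have hrange (σ i l c) : zneg * zΓ i * zW i l * zΦ σ l c ∈ Set.Ioc (-q - 1) q := by
    simpa [Fin.prod_univ_four] using prod_mem_Ioc_of_scaled hγ.1.ne' Finset.univ
      (z := ![zneg, zΓ i, zW i l, zΦ σ l c])
      (by simpa [Fin.prod_univ_four, hzneg, hzΓ, hzW, hzΦ] using hprod σ i l c)
  exact stmt_13_general W (Γ · 0) (Wᵀ * W) q γ zneg hzneg zΓ hzΓ zW hzW zΦ hΦ_gen hrange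
end
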